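/- Fix n ≥ 1 and grade ℂ[b,t,k] by deg b = deg t = 1, deg k = 2, and ℂ[b,q,r₁,r₂] by deg b = deg r₁ = deg r₂ = 1, deg q = 2. For every homogeneous polynomial a ∈ ℂ[b,t,k] of degree at most n+2: if φ(a) lies in the ideal (q(r₁+r₂−4b), x_{n+1}, y_{n+1}, z_{n+1}) of ℂ[b,q,r₁,r₂], then a lies in the ideal (u_{n+1}, v_{n+1}, w_{n+1}) of ℂ[b,t,k]. In other words, the induced map ℂ[b,t,k]/(u_{n+1},v_{n+1},w_{n+1}) → ℂ[b,q,r₁,r₂]/(q(r₁+r₂−4b), x_{n+1}, y_{n+1}, z_{n+1}) is injective in degrees ≤ n+2. -/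

import Mathlib

open MvPolynomial

noncomputable section

/-- `ℂ[b,t,k]`, with variables `0 = b`, `1 = t`, `2 = k`. -/
abbrev R3 : Type := MvPolynomial (Fin 3) ℂ

/-- `ℂ[b,q,r₁,r₂]`, with variables `0 = b`, `1 = q`, `2 = r₁`, `3 = r₂`. -/
abbrev P4 : Type := MvPolynomial (Fin 4) ℂ

/-- The 3×3 matrix `A` over `ℂ[b,t,k]` with rows `(b,0,0)`, `(1,0,k)`, `(0,1,t)`. -/
def A3 : Matrix (Fin 3) (Fin 3) R3 :=
  !![X 0, 0, 0;
     1, 0, X 2;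
     0, 1, X 1]

/-- `G₁ = (b(2b−t), 2b−t, 2)ᵀ`. -/
def G1 : Fin 3 → R3 := ![X 0 * (2 * X 0 - X 1), 2 * X 0 - X 1, 2]

/-- `G_{n+1} = Aⁿ·G₁`, with components `u_{n+1}, v_{n+1}, w_{n+1}`. -/
def G (n : ℕ) : Fin 3 → R3 := (A3 ^ n).mulVec G1

/-- The 3×3 matrix `E` over `ℂ[b,q,r₁,r₂]` with rows `(b,2q,2q)`, `(1,r₁−b,0)`,
`(1,0,r₂−b)`. -/
def E3 : Matrix (Fin 3) (Fin 3) P4 :=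
  !![X 0, 2 * X 1, 2 * X 1;
     1, X 2 - X 0, 0;
     1, 0, X 3 - X 0]

/-- `R_{n+1} = Eⁿ·(b,1,1)ᵀ`, with components `x_{n+1}, y_{n+1}, z_{n+1}`. -/
def Rv (n : ℕ) : Fin 3 → P4 := (E3 ^ n).mulVec ![X 0, 1, 1]

/-- The `ℂ`-algebra homomorphism `φ : ℂ[b,t,k] → ℂ[b,q,r₁,r₂]` with `φ(b)=b`,
`φ(t)=r₁+r₂−2b`, `φ(k)=4q−(b−r₁)(b−r₂)`. -/
def φ : R3 →ₐ[ℂ] P4 :=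
  aeval ![X 0, X 2 + X 3 - 2 * X 0, 4 * X 1 - (X 0 - X 2) * (X 0 - X 3)]

lemma G_succ (n : ℕ) : G (n + 1) = A3.mulVec (G n) := by
  rw [G, G, pow_succ', Matrix.mulVec_mulVec]

lemma G_succ_zero (n : ℕ) : G (n + 1) 0 = X 0 * G n 0 := by
  rw [G_succ]; simp [A3, Matrix.mulVec, dotProduct, Fin.sum_univ_three]

lemma G_succ_one (n : ℕ) : G (n + 1) 1 = G n 0 + X 2 * G n 2 := by
  rw [G_succ]; simp [A3, Matrix.mulVec, dotProduct, Fin.sum_univ_three]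

lemma G_succ_two (n : ℕ) : G (n + 1) 2 = G n 1 + X 1 * G n 2 := by
  rw [G_succ]; simp [A3, Matrix.mulVec, dotProduct, Fin.sum_univ_three]

lemma G_zero : G 0 = G1 := by simp [G]

lemma G_zero_eq (n : ℕ) : G n 0 = X 0 ^ (n + 1) * (2 * X 0 - X 1) := by
  induction n with
  | zero => simp [G_zero, G1]
  | succ n ih => rw [G_succ_zero, ih]; ring

lemma Rv_zero : Rv 0 = ![X 0, 1, 1] := by simp [Rv]

lemma Rv_succ (n : ℕ) : Rv (n + 1) = E3.mulVec (Rv n) := by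
  rw [Rv, Rv, pow_succ', Matrix.mulVec_mulVec]

lemma Rv_succ_zero (n : ℕ) :
    Rv (n + 1) 0 = X 0 * Rv n 0 + 2 * X 1 * Rv n 1 + 2 * X 1 * Rv n 2 := by
  rw [Rv_succ]; simp [E3, Matrix.mulVec, dotProduct, Fin.sum_univ_three]

lemma Rv_succ_one (n : ℕ) : Rv (n + 1) 1 = Rv n 0 + (X 2 - X 0) * Rv n 1 := by
  rw [Rv_succ]; simp [E3, Matrix.mulVec, dotProduct, Fin.sum_univ_three]

lemma Rv_succ_two (n : ℕ) : Rv (n + 1) 2 = Rv n 0 + (X 3 - X 0) * Rv n 2 := by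
  rw [Rv_succ]; simp [E3, Matrix.mulVec, dotProduct, Fin.sum_univ_three]

/-- The part of `x_{n+1}` linear in `q`, once `x_{n+1}` is reduced modulo `q(r₁+r₂−4b)`. -/
def linPart : ℕ → R3
  | 0 => 0
  | n + 1 => X 0 * linPart n + 2 * G n 2

lemma φ_X_zero : φ (X 0) = X 0 := by simp [φ]

lemma φ_X_one : φ (X 1) = X 2 + X 3 - 2 * X 0 := by simp [φ]

lemma φ_X_two : φ (X 2) = 4 * X 1 - (X 0 - X 2) * (X 0 - X 3) := by simp [φ]

/-- Modulo `q(r₁+r₂−4b)`, the entries of `G n` are combinations of those of `Rv n`. -/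
lemma Rv_relations (n : ℕ) : ∃ d e f g : P4,
    φ (G n 0) = (4 * X 0 - X 2 - X 3) * Rv n 0 + X 1 * (X 2 + X 3 - 4 * X 0) * d ∧
    Rv n 0 = X 0 ^ (n + 1) + X 1 * φ (linPart n) + X 1 * (X 2 + X 3 - 4 * X 0) * e ∧
    Rv n 1 + Rv n 2 = φ (G n 2) + X 1 * (X 2 + X 3 - 4 * X 0) * f ∧
    2 * Rv n 0 - (X 3 - X 0) * Rv n 1 - (X 2 - X 0) * Rv n 2 =
      φ (G n 1) + X 1 * (X 2 + X 3 - 4 * X 0) * g := by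
  induction n with
  | zero =>
    refine ⟨0, 0, 0, 0, ?_, ?_, ?_, ?_⟩
    all_goals
      simp only [G_zero, G1, Rv_zero, linPart, Matrix.cons_val, map_mul, map_sub, map_ofNat,
        map_zero, φ_X_zero, φ_X_one]
      ring
  | succ n ih =>
    obtain ⟨d, e, f, g, hd, he, hf, hg⟩ := ih
    refine ⟨X 0 * d + 2 * (Rv n 1 + Rv n 2), X 0 * e + 2 * X 1 * f,
      g + (X 2 + X 3 - 2 * X 0) * f,
      -d + (4 * X 1 - (X 0 - X 2) * (X 0 - X 3)) * f, ?_, ?_, ?_, ?_⟩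
    all_goals
      simp only [G_succ_zero, G_succ_one, G_succ_two, Rv_succ_zero, Rv_succ_one, Rv_succ_two,
        linPart, map_mul, map_add, map_ofNat, φ_X_zero, φ_X_one, φ_X_two]
    · linear_combination X 0 * hd
    · linear_combination X 0 * he + 2 * X 1 * hf
    · linear_combination hg + (X 2 + X 3 - 2 * X 0) * hf
    · linear_combination (4 * X 1 - (X 0 - X 2) * (X 0 - X 3)) * hf - hd

/-- `ℂ[b,q,r₁,r₂]` as the quadratic extension of `ℂ[b,t,k][q]` generated by `ω = r₁ - b`, which
satisfies `ω² = (k - 4q) + tω`. -/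
abbrev QuadExt : Type :=
  QuadraticAlgebra (Polynomial R3) (Polynomial.C (X 2) - 4 * Polynomial.X) (Polynomial.C (X 1))

/-- The inclusion of `ℂ[b,t,k][q]` in the quadratic extension. -/
abbrev incl : Polynomial R3 →+* QuadExt := algebraMap _ _

/-- The conjugation of the quadratic extension, which swaps `r₁` and `r₂`. -/
def conj : QuadExt →+* QuadExt := starRingEnd QuadExt

/-- The generator `r₁ - b` of the quadratic extension. -/
def gen : QuadExt := QuadraticAlgebra.omega

lemma conj_conj (s : QuadExt) : conj (conj s) = s := star_star s

lemma re_conj (s : QuadExt) : (conj s).re = s.re + Polynomial.C (X 1) * s.im := rfl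

lemma im_conj (s : QuadExt) : (conj s).im = -s.im := rfl

lemma conj_incl (r : Polynomial R3) : conj (incl r) = incl r := by
  refine QuadraticAlgebra.ext ?_ ?_ <;> simp [re_conj, im_conj]

lemma add_conj (s : QuadExt) : s + conj s = incl (2 * s.re + Polynomial.C (X 1) * s.im) := by
  refine QuadraticAlgebra.ext ?_ ?_ <;> simp [re_conj, im_conj]
  ring

lemma eq_incl_add_incl_mul_gen (s : QuadExt) : s = incl s.re + incl s.im * gen := by
  refine QuadraticAlgebra.ext ?_ ?_ <;> simp [gen]

lemma gen_add_conj : gen + conj gen = incl (Polynomial.C (X 1)) := by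
  refine QuadraticAlgebra.ext ?_ ?_ <;> simp [re_conj, im_conj, gen]

lemma gen_mul_conj : gen * conj gen = 4 * incl Polynomial.X - incl (Polynomial.C (X 2)) := by
  have h : gen * conj gen = incl (4 * Polynomial.X - Polynomial.C (X 2)) := by
    refine QuadraticAlgebra.ext ?_ ?_ <;> simp [re_conj, im_conj, gen] <;> ring
  rw [h, map_sub, map_mul, map_ofNat]

/-- The identification of `ℂ[b,q,r₁,r₂]` with the quadratic extension. -/
def toQuadExt : P4 →ₐ[ℂ] QuadExt :=
  aeval ![incl (Polynomial.C (X 0)), incl Polynomial.X,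
    gen + incl (Polynomial.C (X 0)), conj gen + incl (Polynomial.C (X 0))]

lemma toQuadExt_X_zero : toQuadExt (X 0) = incl (Polynomial.C (X 0)) := by simp [toQuadExt]

lemma toQuadExt_X_one : toQuadExt (X 1) = incl Polynomial.X := by simp [toQuadExt]

lemma toQuadExt_X_two : toQuadExt (X 2) = gen + incl (Polynomial.C (X 0)) := by
  simp [toQuadExt]

lemma toQuadExt_X_three : toQuadExt (X 3) = conj gen + incl (Polynomial.C (X 0)) := by
  simp [toQuadExt]

lemma toQuadExt_φ (a : R3) : toQuadExt (φ a) = incl (Polynomial.C a) := by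
  suffices h : (toQuadExt.comp φ : R3 →ₐ[ℂ] QuadExt).toRingHom = incl.comp Polynomial.C from
    DFunLike.congr_fun h a
  refine MvPolynomial.ringHom_ext (fun r => ?_) (fun i => ?_)
  · change toQuadExt (φ (algebraMap ℂ R3 r)) = incl (algebraMap R3 _ (algebraMap ℂ R3 r))
    rw [AlgHom.commutes, AlgHom.commutes]
    rfl
  · change toQuadExt (φ (X i)) = incl (Polynomial.C (X i))
    fin_cases i <;>
      simp only [Fin.zero_eta, Fin.mk_one, Fin.reduceFinMk, φ_X_zero, φ_X_one, φ_X_two, map_add,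
        map_sub, map_mul, map_ofNat, toQuadExt_X_zero, toQuadExt_X_one, toQuadExt_X_two,
        toQuadExt_X_three]
    · linear_combination gen_add_conj
    · linear_combination -gen_mul_conj

lemma conj_toQuadExt_Rv (n : ℕ) :
    conj (toQuadExt (Rv n 0)) = toQuadExt (Rv n 0) ∧
    conj (toQuadExt (Rv n 1)) = toQuadExt (Rv n 2) := by
  induction n with
  | zero => simp [Rv_zero, toQuadExt_X_zero, conj_incl]
  | succ n ih =>
    obtain ⟨hx, hy⟩ := ih
    have hz : conj (toQuadExt (Rv n 2)) = toQuadExt (Rv n 1) := by rw [← hy, conj_conj]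
    simp only [Rv_succ_zero, Rv_succ_one, Rv_succ_two, map_add, map_mul, map_sub, map_ofNat,
      toQuadExt_X_zero, toQuadExt_X_one, toQuadExt_X_two, toQuadExt_X_three, conj_incl, hx, hy, hz]
    exact ⟨by ring, trivial⟩

/-- Descent of the ideal membership to `ℂ[b,t,k][q]`. -/
lemma exists_eq_of_mem {n : ℕ} {a : R3}
    (h : φ a ∈ Ideal.span ({X 1 * (X 2 + X 3 - 4 * X 0)} ∪ Set.range (Rv n))) :
    ∃ F α β γ : Polynomial R3, 2 * Polynomial.C a =
      Polynomial.X * Polynomial.C (X 1 - 2 * X 0) * F +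
      α * (Polynomial.C (X 0 ^ (n + 1)) + Polynomial.X * Polynomial.C (linPart n)) +
      β * Polynomial.C (G n 2) + γ * Polynomial.C (G n 1) := by
  rw [Ideal.span_union, Ideal.mem_span_singleton_sup] at h
  obtain ⟨f, r, hr, hfr⟩ := h
  obtain ⟨c, rfl⟩ := (Ideal.mem_span_range_iff_exists_fun).1 hr
  rw [Fin.sum_univ_three] at hfr
  obtain ⟨-, e, f', g, -, he, hf, hg⟩ := Rv_relations n
  obtain ⟨hx, hy⟩ := conj_toQuadExt_Rv n
  replace hfr := congrArg toQuadExt hfr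
  replace he := congrArg toQuadExt he
  replace hf := congrArg toQuadExt hf
  replace hg := congrArg toQuadExt hg
  simp only [map_add, map_sub, map_mul, map_pow, map_ofNat, toQuadExt_X_zero, toQuadExt_X_one,
    toQuadExt_X_two, toQuadExt_X_three, toQuadExt_φ, ← hy] at hfr he hf hg
  have hc := congrArg conj hfr
  simp only [map_add, map_sub, map_mul, map_ofNat, conj_incl, conj_conj, hx] at hc
  have hL : gen + incl (Polynomial.C (X 0)) + (conj gen + incl (Polynomial.C (X 0))) -
      4 * incl (Polynomial.C (X 0)) = incl (Polynomial.C (X 1)) - 2 * incl (Polynomial.C (X 0)) := by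
    linear_combination gen_add_conj
  have hL' : conj gen + incl (Polynomial.C (X 0)) + (gen + incl (Polynomial.C (X 0))) -
      4 * incl (Polynomial.C (X 0)) = incl (Polynomial.C (X 1)) - 2 * incl (Polynomial.C (X 0)) := by
    linear_combination gen_add_conj
  rw [hL] at hfr he hf hg
  rw [hL'] at hc
  set x := toQuadExt (Rv n 0)
  set y := toQuadExt (Rv n 1)
  set δ := toQuadExt (c 1) + conj (toQuadExt (c 2)) with hδ
  have hδc : conj δ = conj (toQuadExt (c 1)) + toQuadExt (c 2) := by
    rw [hδ, map_add, conj_conj]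
  have hα := add_conj (toQuadExt (c 0))
  have hδ₁ := eq_incl_add_incl_mul_gen δ
  have hδ₂ := congrArg conj hδ₁
  simp only [map_add, map_mul, conj_incl] at hδ₂
  set A := 2 * (toQuadExt (c 0)).re + Polynomial.C (X 1) * (toQuadExt (c 0)).im
  have key : incl (2 * Polynomial.C a) =
      incl (Polynomial.X * Polynomial.C (X 1 - 2 * X 0)) *
        (toQuadExt f + conj (toQuadExt f) +
          (incl A - 2 * incl δ.im) * toQuadExt e +
          (incl δ.re + incl (Polynomial.C (X 1)) * incl δ.im) * toQuadExt f' +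
          incl δ.im * toQuadExt g) +
      incl ((A - 2 * δ.im) * (Polynomial.C (X 0 ^ (n + 1)) +
          Polynomial.X * Polynomial.C (linPart n)) +
        (δ.re + Polynomial.C (X 1) * δ.im) * Polynomial.C (G n 2) +
        δ.im * Polynomial.C (G n 1)) := by
    simp only [map_add, map_sub, map_mul, map_pow, map_ofNat]
    linear_combination -hfr - hc + x * hα - y * hδ - conj y * hδc + y * hδ₁ + conj y * hδ₂ +
      (incl δ.re + incl (Polynomial.C (X 1)) * incl δ.im) * hf + incl δ.im * hg +
      (incl A - 2 * incl δ.im) * he + incl δ.im * (y + conj y) * gen_add_conj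
  have hre := congrArg QuadraticAlgebra.re key
  rw [QuadraticAlgebra.re_add, QuadraticAlgebra.re_mul, QuadraticAlgebra.algebraMap_re,
    QuadraticAlgebra.algebraMap_re, QuadraticAlgebra.algebraMap_re, QuadraticAlgebra.algebraMap_im,
    mul_zero, zero_mul, add_zero, ← add_assoc, ← add_assoc] at hre
  exact ⟨_, _, _, _, hre⟩

lemma exists_coeff_eq_of_mem {n : ℕ} {a : R3}
    (h : φ a ∈ Ideal.span ({X 1 * (X 2 + X 3 - 4 * X 0)} ∪ Set.range (Rv n))) :
    ∃ F α α' β β' γ γ' : R3,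
      2 * a = α * X 0 ^ (n + 1) + β * G n 2 + γ * G n 1 ∧
      0 = F * (X 1 - 2 * X 0) + α' * X 0 ^ (n + 1) + α * linPart n + β' * G n 2 + γ' * G n 1 := by
  obtain ⟨F, α, β, γ, hF⟩ := exists_eq_of_mem h
  refine ⟨F.coeff 0, α.coeff 0, α.coeff 1, β.coeff 0, β.coeff 1, γ.coeff 0, γ.coeff 1, ?_, ?_⟩
  · have h0 := congrArg (Polynomial.coeff · 0) hF
    rw [← Polynomial.C_ofNat, ← Polynomial.C_mul] at h0
    simpa only [Polynomial.coeff_add, Polynomial.mul_coeff_zero, Polynomial.coeff_C_zero,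
      Polynomial.coeff_X_zero, zero_mul, zero_add, add_zero] using h0
  · have h1 := congrArg (Polynomial.coeff · 1) hF
    rw [← Polynomial.C_ofNat, ← Polynomial.C_mul] at h1
    simp only [Polynomial.coeff_add, Polynomial.mul_coeff_one, Polynomial.mul_coeff_zero,
      Polynomial.coeff_C_zero, Polynomial.coeff_X_zero, Polynomial.coeff_X_one,
      Polynomial.coeff_C_succ] at h1
    linear_combination h1

lemma weightedHomogeneousComponent_mul_of_isWeightedHomogeneous {σ R : Type*} [CommSemiring R]
    {w : σ → ℕ} {g : MvPolynomial σ R} {d : ℕ} (hg : IsWeightedHomogeneous w g d)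
    (f : MvPolynomial σ R) (p : ℕ) :
    weightedHomogeneousComponent w p (f * g) =
      if d ≤ p then weightedHomogeneousComponent w (p - d) f * g else 0 := by
  let := weightedGradedAlgebra R w
  have h := DirectSum.coe_decompose_mul_of_right_mem (weightedHomogeneousSubmodule R w) (a := f) p
    ((mem_weightedHomogeneousSubmodule R w d g).2 hg)
  rw [← weightedDecomposition.decompose'_apply, ← weightedDecomposition.decompose'_apply]
  exact h

lemma isWeightedHomogeneous_ofNat {σ R : Type*} [CommSemiring R] (w : σ → ℕ) (m : ℕ)
    [m.AtLeastTwo] : IsWeightedHomogeneous w (ofNat(m) : MvPolynomial σ R) 0 := by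
  rw [← map_ofNat (C : R →+* MvPolynomial σ R)]
  exact isWeightedHomogeneous_C _ _

/-- The weights of `b`, `t`, `k`. -/
local notation "wt" => (![1, 1, 2] : Fin 3 → ℕ)

lemma isWeightedHomogeneous_X_zero : IsWeightedHomogeneous wt (X 0 : R3) 1 :=
  isWeightedHomogeneous_X ℂ wt 0

lemma isWeightedHomogeneous_X_one : IsWeightedHomogeneous wt (X 1 : R3) 1 :=
  isWeightedHomogeneous_X ℂ wt 1

lemma isWeightedHomogeneous_X_two : IsWeightedHomogeneous wt (X 2 : R3) 2 :=
  isWeightedHomogeneous_X ℂ wt 2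

lemma isWeightedHomogeneous_two_mul_X_zero : IsWeightedHomogeneous wt (2 * X 0 : R3) 1 := by
  simpa using (isWeightedHomogeneous_ofNat wt 2).mul isWeightedHomogeneous_X_zero

lemma isWeightedHomogeneous_X_zero_pow (n : ℕ) : IsWeightedHomogeneous wt (X 0 ^ n : R3) n := by
  simpa using isWeightedHomogeneous_X_zero.pow n

lemma isWeightedHomogeneous_G (n : ℕ) :
    IsWeightedHomogeneous wt (G n 0) (n + 2) ∧ IsWeightedHomogeneous wt (G n 1) (n + 1) ∧
      IsWeightedHomogeneous wt (G n 2) n := by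
  induction n with
  | zero =>
    have h := isWeightedHomogeneous_two_mul_X_zero.sub isWeightedHomogeneous_X_one
    simp only [G_zero, G1, Matrix.cons_val]
    exact ⟨isWeightedHomogeneous_X_zero.mul h, h, isWeightedHomogeneous_ofNat wt 2⟩
  | succ n ih =>
    obtain ⟨hu, hv, hw⟩ := ih
    rw [G_succ_zero, G_succ_one, G_succ_two]
    have hXu := isWeightedHomogeneous_X_zero.mul hu
    have hXw := isWeightedHomogeneous_X_two.mul hw
    have hX'w := isWeightedHomogeneous_X_one.mul hw
    rw [add_comm] at hXu hXw hX'w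
    exact ⟨hXu, hu.add hXw, hv.add hX'w⟩

lemma isWeightedHomogeneous_linPart_succ (n : ℕ) :
    IsWeightedHomogeneous wt (linPart (n + 1)) n := by
  induction n with
  | zero =>
    simpa [linPart, G_zero, G1] using
      (isWeightedHomogeneous_ofNat wt 2).mul (isWeightedHomogeneous_ofNat wt 2)
  | succ n ih =>
    rw [linPart]
    have h := isWeightedHomogeneous_X_zero.mul ih
    have h' := (isWeightedHomogeneous_ofNat wt 2).mul (isWeightedHomogeneous_G (n + 1)).2.2
    rw [add_comm 1 n] at h
    rw [zero_add] at h'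
    exact h.add h'

lemma exists_eq_of_isWeightedHomogeneous_zero {f : R3} (hf : IsWeightedHomogeneous wt f 0) :
    ∃ c : ℂ, f = C c := by
  refine ⟨coeff 0 f, ?_⟩
  ext d
  rw [coeff_C]
  split_ifs with h0
  · rw [h0]
  refine hf.coeff_eq_zero d fun hd => h0 ?_
  rw [Finsupp.weight_apply, Finsupp.sum_fintype _ _ (by simp), Fin.sum_univ_three] at hd
  simp only [Matrix.cons_val, smul_eq_mul, mul_one] at hd
  ext i
  fin_cases i <;> simp <;> omega

lemma exists_eq_of_isWeightedHomogeneous_one {f : R3} (hf : IsWeightedHomogeneous wt f 1) :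
    ∃ c₁ c₂ : ℂ, f = C c₁ * X 0 + C c₂ * X 1 := by
  refine ⟨coeff (Finsupp.single 0 1) f, coeff (Finsupp.single 1 1) f, ?_⟩
  ext d
  rw [coeff_add, coeff_C_mul, coeff_C_mul, coeff_X, coeff_X]
  by_cases h0 : Finsupp.single 0 1 = d
  · subst h0
    simp [Finsupp.single_left_inj]
  by_cases h1 : Finsupp.single 1 1 = d
  · subst h1
    simp [Finsupp.single_left_inj]
  rw [if_neg h0, if_neg h1, mul_zero, mul_zero, add_zero]
  refine hf.coeff_eq_zero d fun hd => ?_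
  rw [Finsupp.weight_apply, Finsupp.sum_fintype _ _ (by simp), Fin.sum_univ_three] at hd
  simp only [Matrix.cons_val, smul_eq_mul, mul_one] at hd
  have hcases : d 0 = 1 ∧ d 1 = 0 ∧ d 2 = 0 ∨ d 0 = 0 ∧ d 1 = 1 ∧ d 2 = 0 := by omega
  rcases hcases with ⟨e0, e1, e2⟩ | ⟨e0, e1, e2⟩
  · exact h0 (by ext i; fin_cases i <;> simp [e0, e1, e2])
  · exact h1 (by ext i; fin_cases i <;> simp [e0, e1, e2])

lemma eval_zero_G_linPart (n : ℕ) :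
    eval ![1, 2, 0] (G n 0) = 0 ∧ eval ![1, 2, 0] (G n 1) = 0 ∧
      eval ![1, 2, 0] (G n 2) = (2 : ℂ) ^ (n + 1) ∧
      eval ![1, 2, 0] (linPart n) = (2 : ℂ) ^ (n + 2) - 4 := by
  induction n with
  | zero =>
    simp only [G_zero, G1, linPart, Matrix.cons_val]
    norm_num
  | succ n ih =>
    obtain ⟨hu, hv, hw, hl⟩ := ih
    simp only [G_succ_zero, G_succ_one, G_succ_two, linPart, map_add, map_mul, map_ofNat, eval_X,
      hu, hv, hw, hl, Matrix.cons_val]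
    refine ⟨?_, ?_, ?_, ?_⟩ <;> ring

lemma eval_neg_one_G_linPart (n : ℕ) :
    eval ![1, 2, -1] (G n 0) = 0 ∧ eval ![1, 2, -1] (G n 1) = -2 * (n : ℂ) ∧
      eval ![1, 2, -1] (G n 2) = 2 * ((n : ℂ) + 1) ∧
      eval ![1, 2, -1] (linPart n) = 2 * (n : ℂ) * (n + 1) := by
  induction n with
  | zero =>
    simp only [G_zero, G1, linPart, Matrix.cons_val]
    norm_num
  | succ n ih =>
    obtain ⟨hu, hv, hw, hl⟩ := ih
    simp only [G_succ_zero, G_succ_one, G_succ_two, linPart, map_add, map_mul, map_ofNat, eval_X,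
      hu, hv, hw, hl, Matrix.cons_val]
    push_cast
    refine ⟨?_, ?_, ?_, ?_⟩ <;> ring

/-- Over `ℂ[b,k]`, i.e. for `t = 2b`, the linear part is nonzero. -/
lemma eval_linPart_ne_zero {n : ℕ} (hn : 1 ≤ n) : eval ![1, 2, -1] (linPart n) ≠ (0 : ℂ) := by
  rw [(eval_neg_one_G_linPart n).2.2.2]
  have : (n : ℂ) ≠ 0 := by exact_mod_cast (by omega : n ≠ 0)
  have : (n : ℂ) + 1 ≠ 0 := by exact_mod_cast (by omega : n + 1 ≠ 0)
  simp_all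

/-- Over `ℂ[b,k]`, i.e. for `t = 2b`, the multiples of `b` times the linear part and of `w_{n+1}`
are independent as soon as `n ≥ 2`. -/
lemma eq_zero_of_eval_linPart {n : ℕ} (hn : 2 ≤ n) {c d : ℂ}
    (h : ∀ κ : ℂ, c * eval ![1, 2, κ] (linPart n) + d * eval ![1, 2, κ] (G n 2) = 0) : c = 0 := by
  have h0 := h 0
  have h1 := h (-1)
  rw [(eval_zero_G_linPart n).2.2.1, (eval_zero_G_linPart n).2.2.2] at h0
  rw [(eval_neg_one_G_linPart n).2.2.1, (eval_neg_one_G_linPart n).2.2.2] at h1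
  have hn1 : (n : ℂ) + 1 ≠ 0 := by exact_mod_cast (by omega : n + 1 ≠ 0)
  have hd : d = -(n * c) := by
    apply mul_left_cancel₀ hn1
    linear_combination h1 / 2
  have hprod : c * (n * 2 ^ (n + 1) + 4 - 2 ^ (n + 2)) = 0 := by
    rw [hd] at h0
    linear_combination -h0
  refine (mul_eq_zero.1 hprod).resolve_right fun h2 => ?_
  have h3 : n * 2 ^ (n + 1) + 4 = 2 ^ (n + 2) := by
    have : (n : ℂ) * 2 ^ (n + 1) + 4 = 2 ^ (n + 2) := by linear_combination h2
    exact_mod_cast this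
  have h4 : 2 * 2 ^ (n + 1) ≤ n * 2 ^ (n + 1) := Nat.mul_le_mul_right _ hn
  rw [pow_succ 2 (n + 1)] at h3
  omega

/-- The leading coefficient `α` of a relation in degree `p - 2` is harmless. -/
lemma component_mul_pow_mem {n : ℕ} (hn : 1 ≤ n) {p : ℕ} (hp : p ≤ n + 2) (hnp : n + 1 ≤ p)
    {F α α' β γ : R3}
    (h : 0 = F * (X 1 - 2 * X 0) + α' * X 0 ^ (n + 1) + α * linPart n + β * G n 2 + γ * G n 1) :
    weightedHomogeneousComponent wt (p - (n + 1)) α * X 0 ^ (n + 1) ∈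
      Ideal.span {G n 0, G n 1, G n 2} := by
  obtain ⟨m, rfl⟩ : ∃ m, n = m + 1 := ⟨n - 1, by omega⟩
  obtain ⟨-, hv, hw⟩ := isWeightedHomogeneous_G (m + 1)
  have h' := congrArg (weightedHomogeneousComponent wt (p - 2)) h
  rw [map_zero, map_add, map_add, map_add, map_add,
    weightedHomogeneousComponent_mul_of_isWeightedHomogeneous
      (isWeightedHomogeneous_X_one.sub isWeightedHomogeneous_two_mul_X_zero),
    weightedHomogeneousComponent_mul_of_isWeightedHomogeneous
      (isWeightedHomogeneous_X_zero_pow (m + 1 + 1)),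
    weightedHomogeneousComponent_mul_of_isWeightedHomogeneous
      (isWeightedHomogeneous_linPart_succ m),
    weightedHomogeneousComponent_mul_of_isWeightedHomogeneous hw,
    weightedHomogeneousComponent_mul_of_isWeightedHomogeneous hv,
    if_neg (by omega : ¬ m + 1 + 1 ≤ p - 2), if_pos (by omega : m ≤ p - 2),
    if_neg (by omega : ¬ m + 1 + 1 ≤ p - 2), (by omega : p - 2 - m = p - (m + 1 + 1))] at h'
  have hα := weightedHomogeneousComponent_isWeightedHomogeneous (w := wt) (p - (m + 1 + 1)) α
  set A := weightedHomogeneousComponent wt (p - (m + 1 + 1)) α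
  have hev (κ : ℂ) := congrArg (eval ![1, 2, κ]) h'
  simp only [map_add, map_mul, map_sub, map_zero, map_ofNat, apply_ite (eval _), eval_X,
    Matrix.cons_val, mul_one, sub_self, mul_zero, ite_self, zero_add, add_zero] at hev
  obtain rfl | rfl : p = m + 1 + 1 ∨ p = m + 1 + 2 := by omega
  · obtain ⟨c, hc⟩ := exists_eq_of_isWeightedHomogeneous_zero (by simpa using hα)
    have := hev (-1)
    rw [if_neg (by omega), add_zero, hc, eval_C, eq_comm, mul_eq_zero] at this
    rw [hc, this.resolve_right (eval_linPart_ne_zero hn)]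
    simp
  · obtain ⟨c₁, c₂, hc⟩ := exists_eq_of_isWeightedHomogeneous_one (f := A) (by
      rwa [(by omega : m + 1 + 2 - (m + 1 + 1) = 1)] at hα)
    rw [hc]
    rcases Nat.eq_zero_or_pos m with rfl | hm
    · refine Submodule.mem_span_triple.2 ⟨C (c₁ / 4 - c₂ / 2), 0,
        C (c₁ / 4 + c₂ / 2) * X 0 ^ 2, ?_⟩
      have hw₁ : G (0 + 1) 2 = 2 * X 0 + X 1 := by
        simp only [G_succ_two, G_zero, G1, Matrix.cons_val]
        ring
      have h₁ : C c₁ = (4 * C (c₁ / 4) : R3) := by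
        rw [← map_ofNat C, ← C_mul]
        ring_nf
      have h₂ : C c₂ = (2 * C (c₂ / 2) : R3) := by
        rw [← map_ofNat C, ← C_mul]
        ring_nf
      rw [hw₁, G_zero_eq, h₁, h₂]
      simp only [smul_eq_mul, map_sub, map_add]
      ring
    · obtain ⟨d, hd⟩ := exists_eq_of_isWeightedHomogeneous_zero
        (weightedHomogeneousComponent_isWeightedHomogeneous (w := wt) 0 β)
      have hcc : c₁ + 2 * c₂ = 0 := by
        refine eq_zero_of_eval_linPart (by omega : 2 ≤ m + 1) (d := d) fun κ => ?_
        have := hev κ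
        rw [if_pos (by omega), (by omega : m + 1 + 2 - 2 - (m + 1) = 0), hd, hc] at this
        simp at this
        linear_combination -this
      refine Submodule.mem_span_triple.2 ⟨C (-c₂), 0, 0, ?_⟩
      rw [G_zero_eq, show c₁ = -2 * c₂ by linear_combination hcc]
      simp only [smul_eq_mul, map_neg, map_mul, map_ofNat]
      ring

/-- Grade `ℂ[b,t,k]` by `deg b = deg t = 1`, `deg k = 2`, and
`ℂ[b,q,r₁,r₂]` by `deg b = deg r₁ = deg r₂ = 1`, `deg q = 2`.  For `n ≥ 1` and every
homogeneous `a ∈ ℂ[b,t,k]` of degree `p ≤ n+2`: if `φ(a)` lies in the ideal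
`(q(r₁+r₂−4b), x_{n+1}, y_{n+1}, z_{n+1})` of `ℂ[b,q,r₁,r₂]`, then `a` lies in the ideal
`(u_{n+1}, v_{n+1}, w_{n+1})` of `ℂ[b,t,k]`; i.e. the induced map of graded quotients is
injective in degrees `≤ n+2`. -/
theorem stmt15 (n : ℕ) (hn : 1 ≤ n) (p : ℕ) (hp : p ≤ n + 2) (a : R3)
    (ha : IsWeightedHomogeneous ![1, 1, 2] a p)
    (h : φ a ∈ Ideal.span ({X 1 * (X 2 + X 3 - 4 * X 0)} ∪ Set.range (Rv n))) :
    a ∈ Ideal.span {G n 0, G n 1, G n 2} := by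
  obtain ⟨F, α, α', β, β', γ, γ', h0, h1⟩ := exists_coeff_eq_of_mem h
  obtain ⟨-, hv, hw⟩ := isWeightedHomogeneous_G n
  have hmem : 2 * a ∈ Ideal.span {G n 0, G n 1, G n 2} := by
    have h2a : weightedHomogeneousComponent wt p (2 * a) = 2 * a := by
      refine IsWeightedHomogeneous.weightedHomogeneousComponent_same ?_
      simpa using (isWeightedHomogeneous_ofNat wt 2).mul ha
    rw [← h2a, h0, map_add, map_add,
      weightedHomogeneousComponent_mul_of_isWeightedHomogeneous
        (isWeightedHomogeneous_X_zero_pow (n + 1)),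
      weightedHomogeneousComponent_mul_of_isWeightedHomogeneous hw,
      weightedHomogeneousComponent_mul_of_isWeightedHomogeneous hv]
    refine add_mem (add_mem ?_ ?_) ?_ <;> split_ifs with hle
    · exact component_mul_pow_mem hn hp hle h1
    · exact zero_mem _
    · exact Ideal.mul_mem_left _ _ (Ideal.subset_span (by simp))
    · exact zero_mem _
    · exact Ideal.mul_mem_left _ _ (Ideal.subset_span (by simp))
    · exact zero_mem _
  have := Ideal.mul_mem_left _ (C (1 / 2 : ℂ)) hmem
  rwa [← mul_assoc, ← map_ofNat (C : ℂ →+* R3) 2, ← C_mul, one_div,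
    inv_mul_cancel₀ two_ne_zero, C_1, one_mul] at this

end
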